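/- Let (W,S) be a Coxeter system with S finite and twist-rigid, and let μ and μ' be good markings with common core s ∈ S. Then there exists a finite sequence of good markings starting at μ and ending at μ' such that each two consecutive markings in the sequence are related by move N1, move M2 or move M3. -/

import Mathlib

variable {B : Type*} {W : Type*} [Group W] {M : CoxeterMatrix B}

/-- A subset `J` of the index set is *spherical* if the corresponding simple reflections
generate a finite subgroup. -/
def Spherical (cs : CoxeterSystem M W) (J : Set B) : Prop :=
  (Subgroup.closure (cs.simple '' J) : Set W).Finite

/-- Two indices are *adjacent* if the corresponding simple reflections generate a finite
subgroup. -/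
def Adjacent (cs : CoxeterSystem M W) (i j : B) : Prop :=
  (Subgroup.closure {cs.simple i, cs.simple j} : Set W).Finite

/-- A subset is *2-spherical* if every pair of its elements is adjacent. -/
def TwoSpherical (cs : CoxeterSystem M W) (J : Set B) : Prop :=
  ∀ i ∈ J, ∀ j ∈ J, Adjacent cs i j

/-- A subset is *irreducible* if it cannot be partitioned into two nonempty subsets whose
corresponding simple reflections commute elementwise. -/
def IrreducibleSubset (cs : CoxeterSystem M W) (J : Set B) : Prop :=
  ¬ ∃ K L : Set B, K.Nonempty ∧ L.Nonempty ∧ Disjoint K L ∧ K ∪ L = J ∧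
      ∀ k ∈ K, ∀ l ∈ L, Commute (cs.simple k) (cs.simple l)

/-- `perpIn cs T J` is the set `J⊥` of elements of `T ∖ J` whose simple reflections commute
with those of every element of `J`. -/
def perpIn (cs : CoxeterSystem M W) (T J : Set B) : Set B :=
  {i ∈ T \ J | ∀ j ∈ J, Commute (cs.simple i) (cs.simple j)}

/-- A subset `T` of the index set is *connected* if any two of its elements are joined by a
path inside `T` whose edges are adjacent pairs. -/
def ConnectedIn (cs : CoxeterSystem M W) (T : Set B) : Prop :=
  ∀ a ∈ T, ∀ b ∈ T,
    Relation.ReflTransGen (fun x y => x ∈ T ∧ y ∈ T ∧ Adjacent cs x y) a b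

/-- A subset `T` is *twist-rigid* if for every irreducible spherical subset `L ⊆ T` the set
`T ∖ (L ∪ L⊥)` is connected, where `L⊥` is taken inside `T`. -/
def TwistRigidIn (cs : CoxeterSystem M W) (T : Set B) : Prop :=
  ∀ L ⊆ T, IrreducibleSubset cs L → Spherical cs L →
    ConnectedIn cs (T \ (L ∪ perpIn cs T L))

/-- A pair `(s, w)` is a *base* if `ℓ(w⁻¹ s w) = 2 ℓ(w) + 1` and every reflection `t` with
`ℓ(t w) < ℓ(w)` generates together with `s` a finite subgroup. -/
def IsBase (cs : CoxeterSystem M W) (s : B) (w : W) : Prop :=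
  cs.length (w⁻¹ * cs.simple s * w) = 2 * cs.length w + 1 ∧
    ∀ t : W, cs.IsReflection t → cs.length (t * w) < cs.length w →
      (Subgroup.closure {cs.simple s, t} : Set W).Finite

/-- `J` is the *support* of `(s, w)` if it is the smallest subset of the index set containing
`s` with `w ∈ W_J`. -/
def IsSupport (cs : CoxeterSystem M W) (s : B) (w : W) (J : Set B) : Prop :=
  s ∈ J ∧ w ∈ Subgroup.closure (cs.simple '' J) ∧
    ∀ J' : Set B, s ∈ J' → w ∈ Subgroup.closure (cs.simple '' J') → J ⊆ J'

/-- A base `(s, w)` is *simple* if `w` is represented by a reduced word whose letters are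
pairwise distinct and distinct from `s`. -/
def IsSimpleBase (cs : CoxeterSystem M W) (s : B) (w : W) : Prop :=
  IsBase cs s w ∧ ∃ l : List B, w = cs.wordProd l ∧ cs.length w = l.length ∧
    l.Nodup ∧ s ∉ l

/-- The *shadow* of a base `(s, w)` with support `J`: the set of `j ∈ J` with
`ℓ((wj)⁻¹ s (wj)) ≤ ℓ(w⁻¹ s w)`. -/
def shadow (cs : CoxeterSystem M W) (s : B) (w : W) (J : Set B) : Set B :=
  {j ∈ J | cs.length ((w * cs.simple j)⁻¹ * cs.simple s * (w * cs.simple j)) ≤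
    cs.length (w⁻¹ * cs.simple s * w)}

/-- A *marking* `((s, w), m)`: a base `(s, w)` together with its support `supp` and a marker
`m ∈ S ∖ supp⊥`. -/
structure Marking (cs : CoxeterSystem M W) where
  core : B
  elt : W
  marker : B
  supp : Set B
  isBase : IsBase cs core elt
  isSupport : IsSupport cs core elt supp
  marker_not_perp : marker ∉ perpIn cs Set.univ supp

variable {cs : CoxeterSystem M W}

/-- A marking is *complete* if `s · (w m w⁻¹)` has infinite order. -/
def Marking.Complete (μ : Marking cs) : Prop :=
  ¬ IsOfFinOrder (cs.simple μ.core * (μ.elt * cs.simple μ.marker * μ.elt⁻¹))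

/-- A marking is *semi-complete* if `J ∪ {m}` is irreducible, 2-spherical and
non-spherical. -/
def Marking.SemiComplete (μ : Marking cs) : Prop :=
  IrreducibleSubset cs (μ.supp ∪ {μ.marker}) ∧
    TwoSpherical cs (μ.supp ∪ {μ.marker}) ∧ ¬ Spherical cs (μ.supp ∪ {μ.marker})

/-- A marking is *simple* if its base is simple and its marker lies outside its support. -/
def Marking.Simple (μ : Marking cs) : Prop :=
  IsSimpleBase cs μ.core μ.elt ∧ μ.marker ∉ μ.supp

/-- A *good* marking is a complete or semi-complete simple marking with spherical
support. -/
def Marking.Good (μ : Marking cs) : Prop :=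
  (μ.Complete ∨ μ.SemiComplete) ∧ μ.Simple ∧ Spherical cs μ.supp

/-- Move N1: same core, same group element, adjacent markers. -/
def MoveN1 (μ μ' : Marking cs) : Prop :=
  μ.core = μ'.core ∧ μ.elt = μ'.elt ∧ Adjacent cs μ.marker μ'.marker

/-- Move M1: same core, same group element, adjacent markers, both markings complete. -/
def MoveM1 (μ μ' : Marking cs) : Prop :=
  μ.core = μ'.core ∧ μ.elt = μ'.elt ∧ Adjacent cs μ.marker μ'.marker ∧
    μ.Complete ∧ μ'.Complete

/-- Move M2: same core, equal markers, and the group elements differ by one simple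
reflection adjacent to the marker. -/
def MoveM2 (μ μ' : Marking cs) : Prop :=
  μ.core = μ'.core ∧ μ.marker = μ'.marker ∧
    ∃ j : B, (μ.elt = μ'.elt * cs.simple j ∨ μ'.elt = μ.elt * cs.simple j) ∧
      Adjacent cs μ.marker j

/-- Move M3: same core and `J ∪ {m} ∪ J' ∪ {m'}` is 2-spherical. -/
def MoveM3 (μ μ' : Marking cs) : Prop :=
  μ.core = μ'.core ∧
    TwoSpherical cs (μ.supp ∪ {μ.marker} ∪ μ'.supp ∪ {μ'.marker})

/-- `K` is a maximal spherical subset of `J`. -/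
def MaximalSphericalIn (cs : CoxeterSystem M W) (K J : Set B) : Prop :=
  K ⊆ J ∧ Spherical cs K ∧ ∀ L : Set B, K ⊆ L → L ⊆ J → Spherical cs L → L = K

/-- Move M4: same core, the first marking is complete, its marker commutes with some maximal
spherical subset of its support `J`, and `J = J' ∪ {m'}`. -/
def MoveM4 (μ μ' : Marking cs) : Prop :=
  μ.core = μ'.core ∧ μ.Complete ∧
    (∃ K : Set B, MaximalSphericalIn cs K μ.supp ∧
      ∀ k ∈ K, Commute (cs.simple μ.marker) (cs.simple k)) ∧
    μ.supp = μ'.supp ∪ {μ'.marker}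

/-!
Write a good marking `((s, w), m)` as a word: `w` is simple, so its reduced word read from the core
outwards, followed by the marker, grows a set from `{s}` one letter at a time, each letter being new
and failing to commute with something already present. Conversely such a word, stopped at the first
letter that makes the set non-spherical, is a good marking. This rests on the geometric
representation, with `(α, α) = 2` for every root: the root obtained from `α_s` along the word has
all coordinates at least `1` on the set grown so far, so every further letter adds exactly `2` to
the length of the reflection; and if the last letter `m` is not adjacent to some letter of the set,
the pairing of `α_m` with that root is at most `-2`, so `s` and `w m w⁻¹` generate an infinite
group.

Good markings with core `s` are thus the leaves of a tree of growth words. Below a word with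
spherical support `J` the possible next letters are the elements of `S ∖ (J ∪ J⊥)`, which is
connected by twist-rigidity, `J` being irreducible. For adjacent next letters `v` and `v'` some leaf
below `v` is linked to some leaf below `v'`: by N1 if neither letter can be added spherically, by M2
if just one can, by M3 if both can but not together; and if both can together, then `v` and `v'`
commute, since otherwise the coordinate bound again yields a product of two reflections of infinite
order, so the two orders of adding them give the same element. Induction from large `J` to small `J`
then joins all leaves below each word.
-/

section Reflections

open Module Real Polynomial.Chebyshev

theorem chebyshevS_eval_two_mul_cos_pi_div {k : ℕ} (hk : 2 ≤ k) :
    (S ℝ (k - 1)).eval (2 * cos (π / k)) = 0 := by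
  have hk' : (2 : ℝ) ≤ k := by exact_mod_cast hk
  have hsin : sin (π / k) ≠ 0 :=
    (sin_pos_of_pos_of_lt_pi (by positivity) (div_lt_self pi_pos (by linarith))).ne'
  refine (mul_eq_zero.mp ?_).resolve_right hsin
  have hangle : ((k - 1 : ℤ) + 1 : ℝ) * (π / k) = π := by
    push_cast
    field_simp
    ring
  rw [S_two_mul_real_cos, hangle, sin_pi]

theorem chebyshevS_eval_two_mul_cos_add {k : ℕ} (hk : 1 ≤ k) :
    (S ℝ k).eval (2 * cos (2 * π / (2 * k + 1))) +
      (S ℝ (k - 1)).eval (2 * cos (2 * π / (2 * k + 1))) = 0 := by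
  have hk' : (1 : ℝ) ≤ k := by exact_mod_cast hk
  set θ : ℝ := 2 * π / (2 * k + 1) with hθ
  have hsin : sin θ ≠ 0 := by
    refine (sin_pos_of_pos_of_lt_pi (by positivity) ?_).ne'
    rw [hθ, div_lt_iff₀ (by positivity)]
    nlinarith [pi_pos]
  refine (mul_eq_zero.mp ?_).resolve_right hsin
  have hangle : ((k : ℤ) + 1 : ℝ) * θ = 2 * π - ((k - 1 : ℤ) + 1 : ℝ) * θ := by
    push_cast
    rw [hθ]
    field_simp
    ring
  rw [add_mul, S_two_mul_real_cos, S_two_mul_real_cos, hangle, sin_two_pi_sub, neg_add_cancel]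

variable {V : Type*} [AddCommGroup V] [Module ℝ V] {x y : V} {f g : Dual ℝ V}

theorem reflection_mul_reflection_pow_eq_one (hf : f x = 2) (hg : g y = 2) {m : ℕ} (hm : 3 ≤ m)
    (h : f y * g x = 4 * cos (π / m) ^ 2) : (reflection hf * reflection hg) ^ m = 1 := by
  have ht : 2 * cos (2 * π / m) = f y * g x - 2 := by
    rw [h, mul_div_assoc, cos_two_mul]
    ring
  ext1 z
  rw [reflection_mul_reflection_pow_apply hf hg m z _ ht]
  rcases Nat.even_or_odd' m with ⟨k, rfl | rfl⟩
  · have hS := chebyshevS_eval_two_mul_cos_pi_div (k := k) (by omega)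
    rw [show 2 * π / (2 * k : ℕ) = π / k by push_cast; field_simp,
      show (((2 * k : ℕ) : ℤ) - 2) / 2 = k - 1 by omega,
      show (((2 * k : ℕ) : ℤ) - 1) / 2 = k - 1 by omega, hS]
    simp
  · have hS := chebyshevS_eval_two_mul_cos_add (k := k) (by omega)
    rw [show 2 * π / (2 * k + 1 : ℕ) = 2 * π / (2 * k + 1) by push_cast; rfl,
      show (((2 * k + 1 : ℕ) : ℤ) - 2) / 2 = k - 1 by omega,
      show (((2 * k + 1 : ℕ) : ℤ) - 1) / 2 = k by omega,
      show (((2 * k + 1 : ℕ) : ℤ) - 3) / 2 = k - 1 by omega,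
      show ((2 * k + 1 : ℕ) : ℤ) / 2 = k by omega, hS]
    simp

theorem reflection_commute_of_apply_eq_zero (hf : f x = 2) (hg : g y = 2) (hfy : f y = 0)
    (hgx : g x = 0) : Commute (reflection hf) (reflection hg) := by
  ext z
  simp only [LinearEquiv.mul_apply, reflection_apply, map_sub, map_smul, hfy, hgx]
  module

theorem apply_eq_zero_of_reflection_commute {hf : f x = 2} {hg : g y = 2}
    (hxy : LinearIndependent ℝ ![x, y]) (h : Commute (reflection hf) (reflection hg)) :
    f y = 0 := by
  have hy : (2 * f y) • x + (-(f y * g x)) • y = 0 := by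
    have := LinearEquiv.congr_fun h y
    simp only [LinearEquiv.mul_apply, reflection_apply, map_sub, map_smul, hg] at this
    linear_combination (norm := module) this
  have := (LinearIndependent.pair_iff.mp hxy _ _ hy).1
  linarith

theorem not_isOfFinOrder_reflection_mul_reflection (hf : f x = 2) (hg : g y = 2)
    (hxy : LinearIndependent ℝ ![x, y]) (hfy : f y ≤ -2) (hgx : g x ≤ -2) :
    ¬ IsOfFinOrder (reflection hf * reflection hg) := by
  have iterate (k : ℕ) : ∃ p q : ℝ, ((reflection hf * reflection hg) ^ k) x = p • x + q • y ∧
      0 ≤ q ∧ q + 1 ≤ p ∧ (k : ℝ) + 1 ≤ p := by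
    induction k with
    | zero => exact ⟨1, 0, by simp⟩
    | succ k ih =>
      obtain ⟨p, q, hpq, hq, hqp, hkp⟩ := ih
      have hq' : p + 1 ≤ -g x * p - q := by nlinarith
      have hp' : 2 * (-g x * p - q) ≤ -f y * (-g x * p - q) := by nlinarith
      refine ⟨-f y * (-g x * p - q) - p, -g x * p - q, ?_, by linarith, by linarith, ?_⟩
      · rw [pow_succ', LinearEquiv.mul_apply, hpq]
        simp only [LinearEquiv.mul_apply, reflection_apply, map_add, map_sub, map_smul, hf, hg]
        module
      · push_cast
        linarith
  rw [isOfFinOrder_iff_pow_eq_one]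
  rintro ⟨n, hn, h⟩
  obtain ⟨p, q, hpq, -, -, hnp⟩ := iterate n
  have hcoeff : (p - 1) • x + q • y = 0 := by
    rw [sub_smul, one_smul, sub_add_eq_add_sub, ← hpq, h, LinearEquiv.coe_one, id, sub_self]
  have hp := (LinearIndependent.pair_iff.mp hxy _ _ hcoeff).1
  have hn' : (1 : ℝ) ≤ n := by exact_mod_cast hn
  linarith

end Reflections

section GeometricRepresentation

open Real

/-- The entries of the cosine matrix of `M`, scaled so that the diagonal is `2`. Since `M i j = 0`
encodes an infinite order, `π / 0 = 0` gives the intended entry `-2` in that case. -/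
noncomputable def cosEntry (M : CoxeterMatrix B) (i j : B) : ℝ := -2 * cos (π / M i j)

theorem cosEntry_comm (i j : B) : cosEntry M i j = cosEntry M j i := by
  rw [cosEntry, cosEntry, M.symmetric]

theorem cosEntry_self (i : B) : cosEntry M i i = 2 := by simp [cosEntry]

theorem cosEntry_of_eq_zero {i j : B} (h : M i j = 0) : cosEntry M i j = -2 := by
  simp [cosEntry, h]

theorem cosEntry_of_eq_two {i j : B} (h : M i j = 2) : cosEntry M i j = 0 := by
  simp [cosEntry, h]

theorem cosEntry_nonpos {i j : B} (hij : i ≠ j) : cosEntry M i j ≤ 0 := by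
  obtain h0 | h0 := eq_or_ne (M i j) 0
  · norm_num [cosEntry_of_eq_zero h0]
  have h2 : (2 : ℝ) ≤ M i j := by
    have := M.off_diagonal i j hij
    exact_mod_cast (by omega : 2 ≤ M i j)
  have hcos : 0 ≤ cos (π / M i j) :=
    cos_nonneg_of_neg_pi_div_two_le_of_le (by linarith [pi_pos, (by positivity : 0 ≤ π / M i j)])
      (div_le_div_of_nonneg_left pi_pos.le two_pos h2)
  rw [cosEntry]
  linarith

theorem commute_simple_of_eq_two (cs : CoxeterSystem M W) {i j : B} (h : M i j = 2) :
    Commute (cs.simple i) (cs.simple j) := by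
  have hpow := cs.simple_mul_simple_pow i j
  rw [h, pow_two] at hpow
  simpa [Commute, SemiconjBy] using eq_inv_of_mul_eq_one_left hpow

theorem cosEntry_le_neg_one {i j : B} (h : ¬ Commute (cs.simple i) (cs.simple j)) :
    cosEntry M i j ≤ -1 := by
  obtain h0 | h0 := eq_or_ne (M i j) 0
  · norm_num [cosEntry_of_eq_zero h0]
  have h3 : (3 : ℝ) ≤ M i j := by
    have hij : i ≠ j := fun hij => h (hij ▸ Commute.refl _)
    have h1 := M.off_diagonal i j hij
    have h2 : M i j ≠ 2 := fun h2 => h (commute_simple_of_eq_two cs h2)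
    exact_mod_cast (by omega : 3 ≤ M i j)
  have hcos : 1 / 2 ≤ cos (π / M i j) := by
    rw [← cos_pi_div_three]
    exact cos_le_cos_of_nonneg_of_le_pi (by positivity) (by linarith [pi_pos])
      (div_le_div_of_nonneg_left pi_pos.le three_pos h3)
  rw [cosEntry]
  linarith

/-- The simple root `α_i`, as a basis vector of the geometric representation. -/
noncomputable abbrev simpleRoot (i : B) : B →₀ ℝ := Finsupp.single i 1

/-- The symmetric form on the span of the simple roots given by the cosine matrix; with the diagonal
normalised to `2`, the linear form `cosForm M r` is the coroot of a root `r`. -/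
noncomputable def cosForm (M : CoxeterMatrix B) : (B →₀ ℝ) →ₗ[ℝ] (B →₀ ℝ) →ₗ[ℝ] ℝ :=
  Finsupp.linearCombination ℝ fun i => Finsupp.linearCombination ℝ (cosEntry M i)

theorem cosForm_simpleRoot (i j : B) :
    cosForm M (simpleRoot i) (simpleRoot j) = cosEntry M i j := by
  simp [cosForm]

theorem cosForm_simpleRoot_self (i : B) : cosForm M (simpleRoot i) (simpleRoot i) = 2 := by
  rw [cosForm_simpleRoot, cosEntry_self]

theorem cosForm_comm (x y : B →₀ ℝ) : cosForm M x y = cosForm M y x := by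
  suffices h : cosForm M = (cosForm M).flip from LinearMap.congr_fun₂ h x y
  ext i j
  simpa [cosForm] using cosEntry_comm i j

theorem cosForm_simpleRoot_apply (i : B) (v : B →₀ ℝ) :
    cosForm M (simpleRoot i) v = v.sum fun j c => c * cosEntry M i j := by
  simp [cosForm, Finsupp.linearCombination_apply]

theorem cosForm_simpleRoot_le_sum_cosEntry {m : B} {v : B →₀ ℝ} {A : Finset B}
    (hv : ∀ i, 0 ≤ v i) (hm : v m = 0) (hA : ∀ i ∈ A, 1 ≤ v i) :
    cosForm M (simpleRoot m) v ≤ ∑ i ∈ A, cosEntry M m i := by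
  have hnonpos (i : B) (hi : v i ≠ 0) : cosEntry M m i ≤ 0 :=
    cosEntry_nonpos fun hmi => hi (hmi ▸ hm)
  have hsub : A ⊆ v.support := fun i hi =>
    Finsupp.mem_support_iff.mpr (by linarith [hA i hi] : 0 < v i).ne'
  calc cosForm M (simpleRoot m) v = ∑ i ∈ v.support, v i * cosEntry M m i :=
        cosForm_simpleRoot_apply m v
    _ ≤ ∑ i ∈ A, v i * cosEntry M m i :=
        Finset.sum_le_sum_of_subset_of_nonpos' hsub fun i hi _ =>
          mul_nonpos_of_nonneg_of_nonpos (hv i) (hnonpos i (Finsupp.mem_support_iff.mp hi))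
    _ ≤ ∑ i ∈ A, cosEntry M m i := Finset.sum_le_sum fun i hi =>
        mul_le_of_one_le_left (hnonpos i (Finsupp.mem_support_iff.mp (hsub hi))) (hA i hi)

/-- The reflection of the geometric representation in the simple root `α_i`. -/
noncomputable def simpleReflection (M : CoxeterMatrix B) (i : B) : (B →₀ ℝ) ≃ₗ[ℝ] (B →₀ ℝ) :=
  Module.reflection (cosForm_simpleRoot_self (M := M) i)

theorem simpleReflection_isLiftable (M : CoxeterMatrix B) : M.IsLiftable (simpleReflection M) := by
  intro i j
  have hsq (k : B) : simpleReflection M k * simpleReflection M k = 1 :=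
    mul_eq_one_iff_eq_inv.mpr (Module.reflection_inv (cosForm_simpleRoot_self k)).symm
  obtain rfl | hij := eq_or_ne i j
  · rw [hsq, one_pow]
  have h1 := M.off_diagonal i j hij
  obtain h0 | h2 | h3 : M i j = 0 ∨ M i j = 2 ∨ 3 ≤ M i j := by omega
  · rw [h0, pow_zero]
  · have hcomm : Commute (simpleReflection M i) (simpleReflection M j) :=
      reflection_commute_of_apply_eq_zero _ _
        (by rw [cosForm_simpleRoot, cosEntry_of_eq_two h2])
        (by rw [cosForm_simpleRoot, cosEntry_comm, cosEntry_of_eq_two h2])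
    rw [h2, hcomm.mul_pow, pow_two, pow_two, hsq, hsq, one_mul]
  · refine reflection_mul_reflection_pow_eq_one _ _ h3 ?_
    rw [cosForm_simpleRoot, cosForm_simpleRoot, cosEntry_comm j i, cosEntry]
    ring

/-- The geometric representation of a Coxeter group, in which simple generators act by reflections
in the simple roots. -/
noncomputable def geomRep (cs : CoxeterSystem M W) : W →* ((B →₀ ℝ) ≃ₗ[ℝ] (B →₀ ℝ)) :=
  cs.lift ⟨simpleReflection M, simpleReflection_isLiftable M⟩

theorem geomRep_simple_eq_reflection (cs : CoxeterSystem M W) (i : B) :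
    geomRep cs (cs.simple i) = Module.reflection (cosForm_simpleRoot_self (M := M) i) :=
  cs.lift_apply_simple _ i

theorem geomRep_simple (i : B) (v : B →₀ ℝ) :
    geomRep cs (cs.simple i) v = v - cosForm M (simpleRoot i) v • simpleRoot i := by
  rw [geomRep_simple_eq_reflection, Module.reflection_apply]

theorem cosForm_geomRep (w : W) (x y : B →₀ ℝ) :
    cosForm M (geomRep cs w x) (geomRep cs w y) = cosForm M x y := by
  induction w using cs.simple_induction_left generalizing x y with
  | one => simp
  | mul_simple_left w i ih =>
    rw [map_mul, LinearEquiv.mul_apply, LinearEquiv.mul_apply, geomRep_simple, geomRep_simple,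
      ← ih x y]
    simp only [map_sub, map_smul, LinearMap.sub_apply, LinearMap.smul_apply, smul_eq_mul,
      cosForm_simpleRoot_self, cosForm_comm _ (simpleRoot i)]
    ring

theorem cosForm_root_self (cs : CoxeterSystem M W) (w : W) (i : B) :
    cosForm M (geomRep cs w (simpleRoot i)) (geomRep cs w (simpleRoot i)) = 2 := by
  rw [cosForm_geomRep, cosForm_simpleRoot_self]

theorem geomRep_conj_simple (cs : CoxeterSystem M W) (w : W) (i : B) :
    geomRep cs (w * cs.simple i * w⁻¹) = Module.reflection (cosForm_root_self cs w i) := by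
  ext1 v
  have hv : geomRep cs w (geomRep cs w⁻¹ v) = v := by
    rw [← LinearEquiv.mul_apply, ← map_mul, mul_inv_cancel, map_one, LinearEquiv.coe_one, id]
  rw [map_mul, map_mul, LinearEquiv.mul_apply, LinearEquiv.mul_apply, geomRep_simple, map_sub,
    map_smul, hv, Module.reflection_apply, ← cosForm_geomRep (cs := cs) w, hv]

theorem geomRep_apply_of_notMem {K : Set B} {g : W}
    (hg : g ∈ Subgroup.closure (cs.simple '' K)) {j : B} (hj : j ∉ K) (v : B →₀ ℝ) :
    geomRep cs g v j = v j := by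
  have hsimple : ∀ k ∈ K, ∀ v : B →₀ ℝ, geomRep cs (cs.simple k) v j = v j := by
    intro k hk v
    have hkj : k ≠ j := ne_of_mem_of_not_mem hk hj
    simp [geomRep_simple, hkj]
  induction hg using Subgroup.closure_induction_left generalizing v with
  | one => simp
  | mul_left x hx y _ ih =>
    obtain ⟨k, hk, rfl⟩ := hx
    rw [map_mul, LinearEquiv.mul_apply, hsimple k hk, ih]
  | inv_mul_cancel x hx y _ ih =>
    obtain ⟨k, hk, rfl⟩ := hx
    rw [cs.inv_simple, map_mul, LinearEquiv.mul_apply, hsimple k hk, ih]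

theorem simple_notMem_closure (cs : CoxeterSystem M W) {K : Set B} {j : B} (hj : j ∉ K) :
    cs.simple j ∉ Subgroup.closure (cs.simple '' K) := by
  intro h
  have hcoord := geomRep_apply_of_notMem h hj (simpleRoot j)
  rw [geomRep_simple, cosForm_simpleRoot_self] at hcoord
  norm_num at hcoord

end GeometricRepresentation

section StrongExchange

open List CoxeterSystem

theorem prod_map_reverse_alternatingWord {G : Type*} [Monoid G] (f : B → G) (i j : B) (p : ℕ) :
    ((alternatingWord j i (2 * p)).reverse.map f).prod = (f i * f j) ^ p := by
  induction p with
  | zero => simp [alternatingWord]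
  | succ p ih =>
    rw [mul_add_one, alternatingWord_succ, alternatingWord_succ, pow_succ']
    simp [← ih, mul_assoc]

theorem even_count_leftInvSeq_alternatingWord [DecidableEq W] (cs : CoxeterSystem M W) (i j : B)
    (t : W) : Even ((cs.leftInvSeq (alternatingWord i j (2 * M i j))).count t) := by
  set L := cs.leftInvSeq (alternatingWord i j (2 * M i j)) with hL
  have hlength : L.length = 2 * M i j := by simp [hL]
  have hperiodic : L.drop (M i j) = L.take (M i j) := by
    refine List.ext_getElem (by simp [hlength, two_mul]) fun k h₁ h₂ => ?_
    rw [getElem_drop, getElem_take, getElem_leftInvSeq_alternatingWord,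
      getElem_leftInvSeq_alternatingWord, prod_alternatingWord_eq_mul_pow,
      prod_alternatingWord_eq_mul_pow]
    · rw [show (2 * (M i j + k) + 1) / 2 = M j i + k by rw [M.symmetric]; omega,
        show (2 * k + 1) / 2 = k by omega, pow_add, cs.simple_mul_simple_pow, one_mul,
        if_neg (by simp), if_neg (by simp)]
    all_goals
      rw [length_drop, hlength] at h₁
      omega
  rw [← List.take_append_drop (M i j) L, hperiodic, List.count_append]
  exact Even.add_self _

open Classical in
/-- The involution of `W × ZMod 2` by which the simple generator `i` acts on reflections with a
sign: it conjugates by the generator and flips the sign of the generator itself. -/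
noncomputable def signedConjSimple (cs : CoxeterSystem M W) (i : B) : Equiv.Perm (W × ZMod 2) :=
  Function.Involutive.toPerm
    (fun p => (cs.simple i * p.1 * cs.simple i, p.2 + if p.1 = cs.simple i then 1 else 0)) <| by
    rintro ⟨t, e⟩
    have hfix : cs.simple i * t * cs.simple i = cs.simple i ↔ t = cs.simple i := by
      rw [mul_eq_right, ← cs.inv_simple, inv_mul_eq_one, eq_comm, cs.inv_simple]
    ext
    · simp [mul_assoc]
    · simp only [hfix, add_assoc, CharTwo.add_self_eq_zero, add_zero]

open Classical in
theorem signedConjSimple_apply (i : B) (t : W) (e : ZMod 2) :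
    signedConjSimple cs i (t, e) =
      (cs.simple i * t * cs.simple i, e + if t = cs.simple i then 1 else 0) := rfl

open Classical in
theorem prod_map_signedConjSimple (cs : CoxeterSystem M W) (l : List B) (t : W) (e : ZMod 2) :
    (l.map (signedConjSimple cs)).prod (t, e) =
      (cs.wordProd l * t * (cs.wordProd l)⁻¹, e + (cs.rightInvSeq l).count t) := by
  induction l with
  | nil => simp
  | cons i l ih =>
    have hfix : cs.wordProd l * t * (cs.wordProd l)⁻¹ = cs.simple i ↔
        (cs.wordProd l)⁻¹ * cs.simple i * cs.wordProd l = t := by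
      rw [mul_inv_eq_iff_eq_mul, mul_assoc, inv_mul_eq_iff_eq_mul, eq_comm]
    rw [List.map_cons, List.prod_cons, Equiv.Perm.mul_apply, ih, signedConjSimple_apply]
    simp only [hfix, rightInvSeq, count_cons, beq_iff_eq]
    simp [wordProd_cons, mul_assoc, add_assoc]

/-- The inversion sequence of the word `(ij)^(M i j)` runs twice through the same reflections, so
its signs cancel. -/
theorem signedConjSimple_isLiftable (cs : CoxeterSystem M W) :
    M.IsLiftable (signedConjSimple cs) := by
  classical
  intro i j
  have heven := even_count_leftInvSeq_alternatingWord cs j i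
  have hone : cs.wordProd (alternatingWord j i (2 * M j i)) = 1 := by
    rw [prod_alternatingWord_eq_mul_pow]
    simp
  rw [← prod_map_reverse_alternatingWord, M.symmetric]
  ext1 ⟨t, e⟩
  rw [prod_map_signedConjSimple, rightInvSeq_reverse, count_reverse, wordProd_reverse, hone,
    (ZMod.natCast_eq_zero_iff_even).mpr (heven t)]
  simp

/-- The action of `W` on signed reflections. -/
noncomputable def signedConj (cs : CoxeterSystem M W) : W →* Equiv.Perm (W × ZMod 2) :=
  cs.lift ⟨signedConjSimple cs, signedConjSimple_isLiftable cs⟩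

theorem signedConj_simple (cs : CoxeterSystem M W) (i : B) :
    signedConj cs (cs.simple i) = signedConjSimple cs i := cs.lift_apply_simple _ i

open Classical in
theorem signedConj_wordProd (cs : CoxeterSystem M W) (l : List B) (t : W) (e : ZMod 2) :
    signedConj cs (cs.wordProd l) (t, e) =
      (cs.wordProd l * t * (cs.wordProd l)⁻¹, e + (cs.rightInvSeq l).count t) := by
  rw [← prod_map_signedConjSimple, wordProd, map_list_prod, List.map_map]
  congr 3
  exact funext (signedConj_simple cs)

theorem exists_signedConj_apply_self {t : W} (ht : cs.IsReflection t) :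
    ∃ e, signedConj cs t (t, e) = (t, 1 + e) := by
  classical
  obtain ⟨w, i, rfl⟩ := ht
  obtain ⟨l, rfl⟩ := cs.wordProd_surjective w
  have hsimple : signedConj cs (cs.simple i) (cs.simple i, 0) = (cs.simple i, 1) := by
    simp [signedConj_simple, signedConjSimple_apply]
  have hw := signedConj_wordProd cs l (cs.simple i)
  refine ⟨(cs.rightInvSeq l).count (cs.simple i), ?_⟩
  rw [← hw 1, ← hsimple, ← zero_add (List.count _ _ : ZMod 2), ← hw 0, ← Equiv.Perm.mul_apply,
    ← Equiv.Perm.mul_apply, ← map_mul, ← map_mul, inv_mul_cancel_right]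

theorem mem_rightInvSeq_of_length_mul_lt {l : List B} {t : W} (ht : cs.IsReflection t)
    (hlt : cs.length (cs.wordProd l * t) < cs.length (cs.wordProd l)) : t ∈ cs.rightInvSeq l := by
  classical
  by_contra hl
  obtain ⟨l', hl', hprod⟩ := cs.exists_isReduced (cs.wordProd l * t)
  have hl't : t ∉ cs.rightInvSeq l' := by
    intro hmem
    have hlt' := (cs.isRightInversion_of_mem_rightInvSeq hl' hmem).2
    rw [← hprod, mul_assoc, ht.mul_self, mul_one] at hlt'
    exact hlt.asymm hlt'
  obtain ⟨e, he⟩ := exists_signedConj_apply_self ht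
  have hsign := congrArg Prod.snd (congrArg (signedConj cs (cs.wordProd l)) he)
  rw [← Equiv.Perm.mul_apply, ← map_mul, hprod, signedConj_wordProd, signedConj_wordProd,
    count_eq_zero_of_not_mem hl, count_eq_zero_of_not_mem hl't] at hsign
  simp at hsign

theorem mem_leftInvSeq_of_length_mul_lt {l : List B} {t : W} (ht : cs.IsReflection t)
    (hlt : cs.length (t * cs.wordProd l) < cs.length (cs.wordProd l)) : t ∈ cs.leftInvSeq l := by
  rw [← mem_reverse, ← rightInvSeq_reverse]
  refine mem_rightInvSeq_of_length_mul_lt ht ?_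
  rwa [wordProd_reverse, length_inv, ← length_inv, mul_inv_rev, inv_inv, ht.inv]

end StrongExchange

section Parabolic

theorem wordProd_mem_closure (cs : CoxeterSystem M W) {K : Set B} {l : List B}
    (h : ∀ x ∈ l, x ∈ K) : cs.wordProd l ∈ Subgroup.closure (cs.simple '' K) := by
  refine list_prod_mem fun _ ht => ?_
  obtain ⟨x, hx, rfl⟩ := List.mem_map.mp ht
  exact Subgroup.subset_closure ⟨x, h x hx, rfl⟩

theorem mem_closure_of_mem_rightInvSeq {K : Set B} {l : List B} (h : ∀ x ∈ l, x ∈ K) {t : W}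
    (ht : t ∈ cs.rightInvSeq l) : t ∈ Subgroup.closure (cs.simple '' K) := by
  induction l with
  | nil => simp at ht
  | cons i l ih =>
    obtain ⟨hi, hl⟩ := List.forall_mem_cons.mp h
    have hπ := wordProd_mem_closure cs hl
    obtain rfl | ht := List.mem_cons.mp ht
    · exact mul_mem (mul_mem (inv_mem hπ) (Subgroup.subset_closure ⟨i, hi, rfl⟩)) hπ
    · exact ih hl ht

theorem mem_closure_of_mem_leftInvSeq {K : Set B} {l : List B} (h : ∀ x ∈ l, x ∈ K) {t : W}
    (ht : t ∈ cs.leftInvSeq l) : t ∈ Subgroup.closure (cs.simple '' K) :=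
  mem_closure_of_mem_rightInvSeq (l := l.reverse) (by simpa using h)
    (by rwa [cs.rightInvSeq_reverse, List.mem_reverse])

theorem Spherical.mono {J K : Set B} (hK : Spherical cs K) (h : J ⊆ K) : Spherical cs J :=
  Set.Finite.subset hK (Subgroup.closure_mono (Set.image_mono h))

theorem Spherical.isOfFinOrder {J : Set B} (hJ : Spherical cs J) {x : W}
    (hx : x ∈ Subgroup.closure (cs.simple '' J)) : IsOfFinOrder x := by
  have : Finite (Subgroup.closure (cs.simple '' J)) := hJ
  exact Submonoid.isOfFinOrder_coe.mpr
    (isOfFinOrder_of_finite (⟨x, hx⟩ : Subgroup.closure (cs.simple '' J)))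

theorem Spherical.adjacent {J : Set B} (hJ : Spherical cs J) {i j : B} (hi : i ∈ J) (hj : j ∈ J) :
    Adjacent cs i j := by
  refine Set.Finite.subset hJ (Subgroup.closure_mono ?_)
  rintro _ (rfl | rfl)
  exacts [⟨i, hi, rfl⟩, ⟨j, hj, rfl⟩]

theorem Adjacent.symm {i j : B} (h : Adjacent cs i j) : Adjacent cs j i := by
  rwa [Adjacent, Set.pair_comm]

theorem finite_closure_pair_of_isOfFinOrder_mul {G : Type*} [Group G] {a b : G} (ha : a * a = 1)
    (hb : b * b = 1) (hab : IsOfFinOrder (a * b)) : (Subgroup.closure {a, b} : Set G).Finite := by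
  let Z := Subgroup.zpowers (a * b)
  have hba : b * a ∈ Z := by
    have hinv : (a * b)⁻¹ = b * a := by
      rw [mul_inv_rev, inv_eq_of_mul_eq_one_left ha, inv_eq_of_mul_eq_one_left hb]
    exact hinv ▸ inv_mem (Subgroup.mem_zpowers _)
  have hZfin : (Z : Set G).Finite := finite_zpowers.mpr hab
  -- The subgroup is the union of the cyclic group `Z` and its coset `Z a`.
  have hstep : ∀ x, ∀ y ∈ ({a, b} : Set G), (x ∈ Z ∨ x * a ∈ Z) → (x * y ∈ Z ∨ x * y * a ∈ Z) := by
    rintro x y hy (hx | hx) <;> obtain hy | hy := hy <;> rw [hy]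
    · exact .inr (by rwa [mul_assoc, ha, mul_one])
    · exact .inr (by simpa only [mul_assoc] using mul_mem hx hba)
    · exact .inl hx
    · have hxb : x * b = x * a * (a * b) := by rw [mul_assoc x a, ← mul_assoc a a, ha, one_mul]
      exact .inl (hxb ▸ mul_mem hx (Subgroup.mem_zpowers _))
  refine (hZfin.union (hZfin.preimage (mul_left_injective a).injOn)).subset fun x hx => ?_
  change x ∈ Z ∨ x * a ∈ Z
  induction hx using Subgroup.closure_induction_right with
  | one => exact .inl (one_mem _)
  | mul_right x _ y hy ih => exact hstep x y hy ih
  | mul_inv_cancel x _ y hy ih =>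
    have hyinv : y⁻¹ = y := by
      obtain rfl | rfl := hy
      exacts [inv_eq_of_mul_eq_one_left ha, inv_eq_of_mul_eq_one_left hb]
    exact hyinv.symm ▸ hstep x y hy ih

theorem adjacent_of_ne_zero (cs : CoxeterSystem M W) {i j : B} (h : M i j ≠ 0) :
    Adjacent cs i j :=
  finite_closure_pair_of_isOfFinOrder_mul (cs.simple_mul_simple_self i)
    (cs.simple_mul_simple_self j)
    (isOfFinOrder_iff_pow_eq_one.mpr ⟨M i j, Nat.pos_of_ne_zero h, cs.simple_mul_simple_pow i j⟩)

theorem adjacent_self (cs : CoxeterSystem M W) (i : B) : Adjacent cs i i :=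
  adjacent_of_ne_zero cs (by simp)

end Parabolic

section GrowthWords

/-- The set of letters of the word `l` together with `s`. -/
def wordSupport (s : B) (l : List B) : Set B := {x | x ∈ s :: l}

theorem mem_wordSupport {s x : B} {l : List B} : x ∈ wordSupport s l ↔ x = s ∨ x ∈ l :=
  List.mem_cons

theorem self_mem_wordSupport (s : B) (l : List B) : s ∈ wordSupport s l :=
  List.mem_cons_self

theorem wordSupport_cons (s j : B) (l : List B) :
    wordSupport s (j :: l) = wordSupport s l ∪ {j} := by
  ext x
  simp only [mem_wordSupport, List.mem_cons, Set.mem_union, Set.mem_singleton_iff]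
  tauto

theorem wordSupport_subset_of_suffix (s : B) {k l : List B} (h : k <:+ l) :
    wordSupport s k ⊆ wordSupport s l :=
  List.cons_subset_cons s h.subset

/-- A word *grows* from `s` if, read from right to left, each letter is new, distinct from `s`, and
fails to commute with `s` or with an earlier letter. Words are read backwards so that a base
`(s, w)` corresponds to a word for `w⁻¹`, and adjoining a marker to it is `List.cons`. -/
inductive IsGrowthWord (cs : CoxeterSystem M W) (s : B) : List B → Prop
  | nil : IsGrowthWord cs s []
  | cons {j : B} {l : List B} (tail : IsGrowthWord cs s l) (notMem : j ∉ wordSupport s l)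
      (exists_not_commute : ∃ i ∈ wordSupport s l, ¬ Commute (cs.simple j) (cs.simple i)) :
      IsGrowthWord cs s (j :: l)

variable {s : B} {l : List B}

theorem isGrowthWord_cons {j : B} :
    IsGrowthWord cs s (j :: l) ↔ IsGrowthWord cs s l ∧ j ∉ wordSupport s l ∧
      ∃ i ∈ wordSupport s l, ¬ Commute (cs.simple j) (cs.simple i) :=
  ⟨fun | .cons h hj hi => ⟨h, hj, hi⟩, fun ⟨h, hj, hi⟩ => .cons h hj hi⟩

namespace IsGrowthWord

theorem tail_of_cons {j : B} (h : IsGrowthWord cs s (j :: l)) : IsGrowthWord cs s l :=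
  (isGrowthWord_cons.mp h).1

theorem head_notMem {j : B} (h : IsGrowthWord cs s (j :: l)) : j ∉ wordSupport s l :=
  (isGrowthWord_cons.mp h).2.1

theorem of_suffix {k : List B} (h : IsGrowthWord cs s l) (hkl : k <:+ l) :
    IsGrowthWord cs s k := by
  induction h with
  | nil => rw [List.suffix_nil.mp hkl]; exact .nil
  | cons h hj hi ih =>
    obtain rfl | hkl := List.suffix_cons_iff.mp hkl
    exacts [.cons h hj hi, ih hkl]

theorem nodup (h : IsGrowthWord cs s l) : (s :: l).Nodup := by
  induction h with
  | nil => exact List.nodup_singleton s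
  | cons _ hj _ ih => exact (List.Perm.swap _ _ _).nodup (List.nodup_cons.mpr ⟨hj, ih⟩)

theorem wordSupport_subset (h : IsGrowthWord cs s l) {K : Set B} (hs : s ∈ K)
    (hK : ∀ j ∈ l, ∀ i ∈ K, ¬ Commute (cs.simple j) (cs.simple i) → j ∈ K) :
    wordSupport s l ⊆ K := by
  induction h with
  | nil => exact fun x hx => List.mem_singleton.mp hx ▸ hs
  | @cons j l _ _ hi ih =>
    obtain ⟨hjK, hlK⟩ := List.forall_mem_cons.mp hK
    obtain ⟨i, hi, hji⟩ := hi
    have hl := ih hlK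
    rw [wordSupport_cons]
    exact Set.union_subset hl (Set.singleton_subset_iff.mpr (hjK i (hl hi) hji))

theorem irreducibleSubset (h : IsGrowthWord cs s l) :
    IrreducibleSubset cs (wordSupport s l) := by
  rintro ⟨K, L, hK, hL, hdisj, hunion, hcomm⟩
  wlog hsK : s ∈ K generalizing K L
  · have hsL := (hunion ▸ self_mem_wordSupport s l : s ∈ K ∪ L).resolve_left hsK
    exact this L K hL hK hdisj.symm (Set.union_comm K L ▸ hunion)
      (fun a ha b hb => (hcomm b hb a ha).symm) hsL
  have hsub : wordSupport s l ⊆ K := h.wordSupport_subset hsK fun j hj i hi hji => by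
    have hj : j ∈ K ∪ L := hunion ▸ mem_wordSupport.mpr (.inr hj)
    exact hj.resolve_right fun hjL => hji (hcomm i hi j hjL).symm
  obtain ⟨x, hx⟩ := hL
  exact Set.disjoint_left.mp hdisj (hsub (hunion ▸ .inr hx)) hx

end IsGrowthWord

end GrowthWords

section WordRoots

variable {s : B} {l : List B}

theorem wordProd_mem_closure_wordSupport (cs : CoxeterSystem M W) (s : B) (l : List B) :
    cs.wordProd l ∈ Subgroup.closure (cs.simple '' wordSupport s l) :=
  wordProd_mem_closure cs fun _ hx => mem_wordSupport.mpr (.inr hx)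

/-- The root `w⁻¹ α_s` of the geometric representation, where the word `l` represents `w⁻¹`. -/
noncomputable def wordRoot (cs : CoxeterSystem M W) (s : B) (l : List B) : B →₀ ℝ :=
  geomRep cs (cs.wordProd l) (simpleRoot s)

theorem wordRoot_cons (j : B) : wordRoot cs s (j :: l) =
    wordRoot cs s l - cosForm M (simpleRoot j) (wordRoot cs s l) • simpleRoot j := by
  rw [wordRoot, cs.wordProd_cons, map_mul, LinearEquiv.mul_apply, geomRep_simple, wordRoot]

theorem wordRoot_apply_of_notMem {x : B} (hx : x ∉ wordSupport s l) :
    wordRoot cs s l x = 0 := by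
  have hsx : s ≠ x := fun h => hx (h ▸ self_mem_wordSupport s l)
  rw [wordRoot, geomRep_apply_of_notMem (wordProd_mem_closure_wordSupport cs s l) hx,
    Finsupp.single_eq_of_ne' hsx]

namespace IsGrowthWord

theorem one_le_wordRoot_apply (h : IsGrowthWord cs s l) {x : B} (hx : x ∈ wordSupport s l) :
    1 ≤ wordRoot cs s l x := by
  induction h generalizing x with
  | nil =>
    obtain rfl := List.mem_singleton.mp hx
    simp [wordRoot]
  | @cons j l _ hj hi ih =>
    obtain ⟨i, hi, hji⟩ := hi
    have hnonneg (y : B) : 0 ≤ wordRoot cs s l y := by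
      by_cases hy : y ∈ wordSupport s l
      · linarith [ih hy]
      · rw [wordRoot_apply_of_notMem hy]
    rw [wordRoot_cons]
    obtain rfl | hxj := eq_or_ne x j
    · have hpair := cosForm_simpleRoot_le_sum_cosEntry (M := M) (A := {i}) hnonneg
        (wordRoot_apply_of_notMem hj) (by simpa using ih hi)
      rw [Finset.sum_singleton] at hpair
      simp only [Finsupp.sub_apply, Finsupp.smul_apply, Finsupp.single_eq_same, smul_eq_mul,
        mul_one, wordRoot_apply_of_notMem hj]
      linarith [cosEntry_le_neg_one hji]
    · have hx' : x ∈ wordSupport s l := by simpa [wordSupport_cons, hxj] using hx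
      simpa [hxj] using ih hx'

theorem wordRoot_nonneg (h : IsGrowthWord cs s l) (x : B) : 0 ≤ wordRoot cs s l x := by
  by_cases hx : x ∈ wordSupport s l
  · linarith [h.one_le_wordRoot_apply hx]
  · rw [wordRoot_apply_of_notMem hx]

theorem cosForm_wordRoot_le (h : IsGrowthWord cs s l) {m : B} (hm : m ∉ wordSupport s l)
    {A : Finset B} (hA : ∀ i ∈ A, i ∈ wordSupport s l) :
    cosForm M (simpleRoot m) (wordRoot cs s l) ≤ ∑ i ∈ A, cosEntry M m i :=
  cosForm_simpleRoot_le_sum_cosEntry h.wordRoot_nonneg (wordRoot_apply_of_notMem hm)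
    fun _ hi => h.one_le_wordRoot_apply (hA _ hi)

theorem linearIndependent_wordRoot_simpleRoot (h : IsGrowthWord cs s l) {m : B}
    (hm : m ∉ wordSupport s l) :
    LinearIndependent ℝ ![wordRoot cs s l, simpleRoot m] := by
  refine LinearIndependent.pair_iff.mpr fun a b hab => ?_
  have hs := h.one_le_wordRoot_apply (self_mem_wordSupport s l)
  have hms : m ≠ s := fun hms => hm (hms ▸ self_mem_wordSupport s l)
  have ha : a = 0 := by
    have hcoord : a = 0 ∨ wordRoot cs s l s = 0 := by simpa [hms] using DFunLike.congr_fun hab s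
    exact hcoord.resolve_right (by linarith)
  have hb := DFunLike.congr_fun hab m
  exact ⟨ha, by simpa [ha] using hb⟩

end IsGrowthWord

/-- The reflection `w⁻¹ s w` in the root `wordRoot cs s l`, where the word `l` represents `w⁻¹`. -/
def wordReflection (cs : CoxeterSystem M W) (s : B) (l : List B) : W :=
  cs.wordProd l * cs.simple s * (cs.wordProd l)⁻¹

theorem wordProd_palindrome (cs : CoxeterSystem M W) (s : B) (l : List B) :
    cs.wordProd (l ++ s :: l.reverse) = wordReflection cs s l := by
  rw [cs.wordProd_append, cs.wordProd_cons, cs.wordProd_reverse, wordReflection, mul_assoc]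

theorem wordReflection_cons (j : B) : wordReflection cs s (j :: l) =
    cs.simple j * wordReflection cs s l * cs.simple j := by
  simp only [wordReflection, cs.wordProd_cons, mul_inv_rev, cs.inv_simple, mul_assoc]

theorem wordReflection_mem_closure (cs : CoxeterSystem M W) (s : B) (l : List B) :
    wordReflection cs s l ∈ Subgroup.closure (cs.simple '' wordSupport s l) :=
  have hl := wordProd_mem_closure_wordSupport cs s l
  mul_mem (mul_mem hl (Subgroup.subset_closure ⟨s, self_mem_wordSupport s l, rfl⟩)) (inv_mem hl)

theorem geomRep_wordReflection (cs : CoxeterSystem M W) (s : B) (l : List B) :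
    geomRep cs (wordReflection cs s l) =
      Module.reflection (cosForm_root_self cs (cs.wordProd l) s) :=
  geomRep_conj_simple cs _ s

namespace IsGrowthWord

theorem not_isOfFinOrder_wordReflection_mul (h : IsGrowthWord cs s l) {m : B}
    (hm : m ∉ wordSupport s l) (hpair : cosForm M (simpleRoot m) (wordRoot cs s l) ≤ -2) :
    ¬ IsOfFinOrder (wordReflection cs s l * cs.simple m) := by
  intro hfin
  have := (geomRep cs).isOfFinOrder hfin
  rw [map_mul, geomRep_wordReflection, geomRep_simple_eq_reflection] at this
  exact not_isOfFinOrder_reflection_mul_reflection _ _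
    (h.linearIndependent_wordRoot_simpleRoot hm) (cosForm_comm _ (simpleRoot m) ▸ hpair) hpair this

theorem not_commute_wordReflection {j : B} (h : IsGrowthWord cs s (j :: l)) :
    ¬ Commute (wordReflection cs s l) (cs.simple j) := by
  obtain ⟨hl, hj, i, hi, hji⟩ := isGrowthWord_cons.mp h
  intro hcomm
  have hcomm := hcomm.map (geomRep cs)
  rw [geomRep_wordReflection, geomRep_simple_eq_reflection] at hcomm
  have hzero := apply_eq_zero_of_reflection_commute
    (hl.linearIndependent_wordRoot_simpleRoot hj) hcomm
  have hle := hl.cosForm_wordRoot_le hj (A := {i}) (by simpa using hi)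
  rw [Finset.sum_singleton, cosForm_comm, wordRoot, hzero] at hle
  linarith [cosEntry_le_neg_one hji]

theorem isReduced_palindrome (h : IsGrowthWord cs s l) :
    cs.IsReduced (l ++ s :: l.reverse) := by
  induction h with
  | nil => simp [CoxeterSystem.IsReduced]
  | @cons j l hl hj hi ih =>
    have hletters : ∀ x ∈ l ++ s :: l.reverse, x ∈ wordSupport s l := by
      simp only [List.mem_append, List.mem_cons, List.mem_reverse, mem_wordSupport]
      tauto
    have hj' := simple_notMem_closure cs hj
    set r := wordReflection cs s l
    have hr : cs.wordProd (l ++ s :: l.reverse) = r := wordProd_palindrome cs s l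
    have hleft : cs.length (cs.simple j * r) = cs.length r + 1 := by
      refine (cs.length_simple_mul r j).resolve_right fun hlt => hj' ?_
      exact mem_closure_of_mem_leftInvSeq hletters
        (mem_leftInvSeq_of_length_mul_lt (cs.isReflection_simple j) (by rw [hr]; omega))
    have hright : cs.length (cs.simple j * r * cs.simple j) = cs.length (cs.simple j * r) + 1 := by
      refine (cs.length_mul_simple _ j).resolve_right fun hlt => ?_
      have hmem : cs.simple j ∈ cs.rightInvSeq (j :: (l ++ s :: l.reverse)) :=
        mem_rightInvSeq_of_length_mul_lt (cs.isReflection_simple j)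
          (by rw [cs.wordProd_cons, hr]; omega)
      obtain heq | hmem := List.mem_cons.mp hmem
      · rw [hr, mul_assoc, eq_inv_mul_iff_mul_eq] at heq
        exact (hl.cons hj hi).not_commute_wordReflection heq
      · exact hj' (mem_closure_of_mem_rightInvSeq hletters hmem)
    rw [CoxeterSystem.IsReduced, hr] at ih
    rw [CoxeterSystem.IsReduced, wordProd_palindrome, wordReflection_cons, hright, hleft, ih]
    simp only [List.length_append, List.length_cons, List.length_reverse]
    omega

theorem length_wordProd (h : IsGrowthWord cs s l) : cs.length (cs.wordProd l) = l.length := by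
  have := h.isReduced_palindrome.take l.length
  rwa [List.take_left] at this

theorem length_wordReflection (h : IsGrowthWord cs s l) :
    cs.length (wordReflection cs s l) = 2 * l.length + 1 := by
  rw [← wordProd_palindrome, h.isReduced_palindrome, List.length_append, List.length_cons,
    List.length_reverse]
  ring

end IsGrowthWord

end WordRoots

section GrowthWordCriteria

variable {s : B} {l : List B}

theorem mem_of_wordProd_mem_closure (hl : l.Nodup) {K : Set B}
    (hK : cs.wordProd l ∈ Subgroup.closure (cs.simple '' K)) {x : B} (hx : x ∈ l) : x ∈ K := by
  by_contra hxK
  obtain ⟨p, u, rfl⟩ := List.append_of_mem hx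
  have hmem {k : List B} (hk : x ∉ k) :
      cs.wordProd k ∈ Subgroup.closure (cs.simple '' {x}ᶜ) :=
    wordProd_mem_closure cs fun _ hy => ne_of_mem_of_not_mem hy hk
  obtain ⟨hxpu, -⟩ := List.nodup_cons.mp (List.nodup_middle.mp hl)
  rw [List.mem_append, not_or] at hxpu
  have hprod : cs.simple x =
      (cs.wordProd p)⁻¹ * cs.wordProd (p ++ x :: u) * (cs.wordProd u)⁻¹ := by
    rw [cs.wordProd_append, cs.wordProd_cons]
    group
  refine simple_notMem_closure cs (Set.notMem_compl_iff.mpr (Set.mem_singleton x)) ?_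
  rw [hprod]
  exact mul_mem (mul_mem (inv_mem (hmem hxpu.1))
    (Subgroup.closure_mono (Set.image_mono (Set.subset_compl_singleton_iff.mpr hxK)) hK))
    (inv_mem (hmem hxpu.2))

theorem length_wordReflection_le (cs : CoxeterSystem M W) (s : B) (l : List B) :
    cs.length (wordReflection cs s l) ≤ 2 * l.length + 1 := by
  rw [← wordProd_palindrome]
  refine (cs.length_wordProd_le _).trans_eq ?_
  rw [List.length_append, List.length_cons, List.length_reverse]
  ring

theorem commute_of_mem_closure {K : Set B} {j : B}
    (hj : ∀ i ∈ K, Commute (cs.simple j) (cs.simple i)) {w : W}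
    (hw : w ∈ Subgroup.closure (cs.simple '' K)) : Commute (cs.simple j) w := by
  have hle : Subgroup.closure (cs.simple '' K) ≤ Subgroup.centralizer {cs.simple j} := by
    rw [Subgroup.closure_le]
    rintro _ ⟨i, hi, rfl⟩
    exact Subgroup.mem_centralizer_singleton_iff.mpr (hj i hi).symm
  exact (Subgroup.mem_centralizer_singleton_iff.mp (hle hw)).symm

theorem isGrowthWord_of_length_wordReflection (hl : (s :: l).Nodup)
    (hlen : cs.length (wordReflection cs s l) = 2 * l.length + 1) : IsGrowthWord cs s l := by
  induction l with
  | nil => exact .nil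
  | cons j l ih =>
    obtain ⟨hj, hsl⟩ := List.nodup_cons.mp ((List.Perm.swap j s l).nodup_iff.mp hl)
    rw [wordReflection_cons, List.length_cons] at hlen
    set r := wordReflection cs s l
    have hr : cs.length r ≤ 2 * l.length + 1 := length_wordReflection_le cs s l
    have hleft := cs.length_simple_mul r j
    have hright := cs.length_mul_simple (cs.simple j * r) j
    refine .cons (ih hsl (by omega)) hj ?_
    by_contra! hcomm
    have hjr : Commute (cs.simple j) r :=
      commute_of_mem_closure hcomm (wordReflection_mem_closure cs s l)
    rw [hjr.eq, mul_assoc, cs.simple_mul_simple_self, mul_one] at hlen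
    omega

theorem wordSupport_append (s : B) (u l : List B) :
    wordSupport s (u ++ l) = {x | x ∈ u} ∪ wordSupport s l := by
  ext x
  simp only [mem_wordSupport, List.mem_append, Set.mem_union, Set.mem_ofPred_eq]
  tauto

theorem wordSupport_swap (s i j : B) (l : List B) :
    wordSupport s (i :: j :: l) = wordSupport s (j :: i :: l) := by
  rw [wordSupport_cons, wordSupport_cons, Set.union_right_comm, ← wordSupport_cons,
    ← wordSupport_cons]

theorem notMem_perpIn_univ {J : Set B} {j : B} (hj : j ∉ J) :
    j ∉ perpIn cs Set.univ J ↔ ∃ i ∈ J, ¬ Commute (cs.simple j) (cs.simple i) := by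
  refine ⟨fun h => ?_, fun ⟨i, hi, hji⟩ h => hji (h.2 i hi)⟩
  by_contra! hcomm
  exact h ⟨⟨Set.mem_univ j, hj⟩, hcomm⟩

namespace IsGrowthWord

theorem cons_iff_mem_compl (h : IsGrowthWord cs s l) {v : B} : IsGrowthWord cs s (v :: l) ↔
    v ∈ Set.univ \ (wordSupport s l ∪ perpIn cs Set.univ (wordSupport s l)) := by
  rw [isGrowthWord_cons, Set.mem_sdiff, Set.mem_union, not_or]
  simp only [h, Set.mem_univ, true_and]
  exact and_congr_right fun hv => (notMem_perpIn_univ hv).symm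

theorem cons_cons {v v' : B} (h : IsGrowthWord cs s (v :: l)) (h' : IsGrowthWord cs s (v' :: l))
    (hne : v' ≠ v) : IsGrowthWord cs s (v' :: v :: l) := by
  obtain ⟨-, hv', i, hi, hcomm⟩ := isGrowthWord_cons.mp h'
  refine h.cons ?_ ⟨i, ?_, hcomm⟩ <;> rw [wordSupport_cons]
  exacts [not_or_intro hv' hne, .inl hi]

theorem append_congr {k u : List B} (h : IsGrowthWord cs s (u ++ l)) (hk : IsGrowthWord cs s k)
    (hlk : wordSupport s l = wordSupport s k) : IsGrowthWord cs s (u ++ k) := by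
  induction u with
  | nil => exact hk
  | cons j u ih =>
    obtain ⟨hul, hj, hi⟩ := isGrowthWord_cons.mp h
    have hsupp : wordSupport s (u ++ l) = wordSupport s (u ++ k) := by
      rw [wordSupport_append, hlk, ← wordSupport_append]
    exact (ih hul).cons (hsupp ▸ hj) (hsupp ▸ hi)

theorem exists_append {k : List B} (hl : IsGrowthWord cs s l) (hk : IsGrowthWord cs s k) :
    ∃ u, IsGrowthWord cs s (u ++ l) ∧ wordSupport s k ⊆ wordSupport s (u ++ l) := by
  induction hk with
  | nil => exact ⟨[], hl, wordSupport_subset_of_suffix s List.nil_suffix⟩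
  | @cons j k _ _ hi ih =>
    obtain ⟨u, hu, hku⟩ := ih
    obtain ⟨i, hik, hji⟩ := hi
    by_cases hj : j ∈ wordSupport s (u ++ l)
    · exact ⟨u, hu, wordSupport_cons s j k ▸ Set.union_subset hku (Set.singleton_subset_iff.mpr hj)⟩
    · refine ⟨j :: u, hu.cons hj ⟨i, hku hik, hji⟩, ?_⟩
      rw [List.cons_append, wordSupport_cons, wordSupport_cons]
      exact Set.union_subset_union_left _ hku

theorem neg_two_lt_cosForm_wordRoot (h : IsGrowthWord cs s l) {m : B}
    (hm : m ∉ wordSupport s l) (hsph : Spherical cs (wordSupport s (m :: l))) :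
    -2 < cosForm M (simpleRoot m) (wordRoot cs s l) := by
  by_contra! hle
  refine h.not_isOfFinOrder_wordReflection_mul hm hle (hsph.isOfFinOrder (mul_mem ?_ ?_))
  · exact Subgroup.closure_mono (Set.image_mono (wordSupport_subset_of_suffix s
      (List.suffix_cons m l))) (wordReflection_mem_closure cs s l)
  · exact Subgroup.subset_closure ⟨m, mem_wordSupport.mpr (.inr List.mem_cons_self), rfl⟩

/-- The diagram of a finite Coxeter group has no cycles. -/
theorem commute_of_spherical {v v' : B} (h : IsGrowthWord cs s (v :: l))
    (h' : IsGrowthWord cs s (v' :: l)) (hne : v' ≠ v)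
    (hsph : Spherical cs (wordSupport s (v' :: v :: l))) :
    Commute (cs.simple v') (cs.simple v) := by
  classical
  by_contra hvv'
  obtain ⟨-, -, i, hi, hv'i⟩ := isGrowthWord_cons.mp h'
  have hv' := (h.cons_cons h' hne).head_notMem
  have hvi : v ≠ i := fun hvi => h.head_notMem (hvi ▸ hi)
  have hpair := h.cosForm_wordRoot_le hv' (A := {v, i}) (by
    simp only [wordSupport_cons, Finset.mem_insert, Finset.mem_singleton]
    rintro _ (rfl | rfl)
    exacts [.inr rfl, .inl hi])
  rw [Finset.sum_pair hvi] at hpair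
  linarith [h.neg_two_lt_cosForm_wordRoot hv' hsph, cosEntry_le_neg_one hvv',
    cosEntry_le_neg_one hv'i]

end IsGrowthWord

end GrowthWordCriteria

section MarkingWords

variable {s m : B} {l : List B}

theorem IsGrowthWord.isBase (h : IsGrowthWord cs s l) (hsph : Spherical cs (wordSupport s l)) :
    IsBase cs s (cs.wordProd l)⁻¹ := by
  refine ⟨?_, fun t ht hlt => hsph.subset ((Subgroup.closure_le _).mpr ?_)⟩
  · rw [inv_inv, cs.length_inv, h.length_wordProd]
    exact h.length_wordReflection
  · rw [← cs.wordProd_reverse] at hlt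
    rintro _ (rfl | rfl)
    · exact Subgroup.subset_closure ⟨s, self_mem_wordSupport s l, rfl⟩
    · exact mem_closure_of_mem_leftInvSeq
        (fun x hx => mem_wordSupport.mpr (.inr (List.mem_reverse.mp hx)))
        (mem_leftInvSeq_of_length_mul_lt ht hlt)

theorem isSupport_wordSupport (hl : l.Nodup) :
    IsSupport cs s (cs.wordProd l)⁻¹ (wordSupport s l) := by
  refine ⟨self_mem_wordSupport s l, inv_mem (wordProd_mem_closure_wordSupport cs s l),
    fun J hsJ hJ x hx => ?_⟩
  obtain rfl | hx := mem_wordSupport.mp hx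
  exacts [hsJ, mem_of_wordProd_mem_closure hl (inv_mem_iff.mp hJ) hx]

theorem IsSupport.unique {w : W} {J K : Set B} (hJ : IsSupport cs s w J)
    (hK : IsSupport cs s w K) : J = K :=
  (hJ.2.2 K hK.1 hK.2.1).antisymm (hK.2.2 J hJ.1 hJ.2.1)

theorem Marking.eq_of_core_elt_marker {μ ν : Marking cs} (hcore : μ.core = ν.core)
    (helt : μ.elt = ν.elt) (hmarker : μ.marker = ν.marker) : μ = ν := by
  have hsupp : μ.supp = ν.supp :=
    IsSupport.unique μ.isSupport (hcore ▸ helt ▸ ν.isSupport)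
  cases μ
  cases ν
  congr

/-- The combinatorial form of a good marking `((s, w), m)`, where `l` is a word for `w⁻¹`: adjoining
the marker is the step at which the growing support ceases to be spherical. -/
structure IsMarkingWord (cs : CoxeterSystem M W) (s m : B) (l : List B) : Prop where
  isGrowthWord : IsGrowthWord cs s (m :: l)
  spherical : Spherical cs (wordSupport s l)
  not_spherical : ¬ Spherical cs (wordSupport s (m :: l))

namespace IsMarkingWord

/-- The marking `((s, w), m)` of a marking word. -/
def toMarking (h : IsMarkingWord cs s m l) : Marking cs where
  core := s
  elt := (cs.wordProd l)⁻¹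
  marker := m
  supp := wordSupport s l
  isBase := h.isGrowthWord.tail_of_cons.isBase h.spherical
  isSupport := isSupport_wordSupport h.isGrowthWord.tail_of_cons.nodup.of_cons
  marker_not_perp := (notMem_perpIn_univ h.isGrowthWord.head_notMem).mpr
    (isGrowthWord_cons.mp h.isGrowthWord).2.2

theorem complete_toMarking (h : IsMarkingWord cs s m l) {j : B} (hj : j ∈ wordSupport s l)
    (hmj : ¬ Adjacent cs m j) : h.toMarking.Complete := by
  have hM : M m j = 0 := by
    by_contra hM
    exact hmj (adjacent_of_ne_zero cs hM)
  have hl := h.isGrowthWord.tail_of_cons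
  have hm := h.isGrowthWord.head_notMem
  have hpair := hl.cosForm_wordRoot_le hm (A := {j}) (by simpa using hj)
  rw [Finset.sum_singleton, cosEntry_of_eq_zero hM] at hpair
  refine mt ?_ (hl.not_isOfFinOrder_wordReflection_mul hm hpair)
  refine IsConj.isOfFinOrder (isConj_iff.mpr ⟨cs.wordProd l, ?_⟩)
  simp only [toMarking, wordReflection]
  group

theorem semiComplete_toMarking (h : IsMarkingWord cs s m l)
    (hm : ∀ j ∈ wordSupport s l, Adjacent cs m j) : h.toMarking.SemiComplete := by
  have hsupp : h.toMarking.supp ∪ {h.toMarking.marker} = wordSupport s (m :: l) :=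
    (wordSupport_cons s m l).symm
  rw [Marking.SemiComplete, hsupp]
  refine ⟨h.isGrowthWord.irreducibleSubset, ?_, h.not_spherical⟩
  rw [wordSupport_cons]
  rintro i (hi | rfl) j (hj | rfl)
  exacts [h.spherical.adjacent hi hj, (hm i hi).symm, hm j hj, adjacent_self cs _]

theorem good_toMarking (h : IsMarkingWord cs s m l) : h.toMarking.Good := by
  have hl := h.isGrowthWord.tail_of_cons
  obtain ⟨hsl, hnodup⟩ := List.nodup_cons.mp hl.nodup
  refine ⟨?_, ⟨⟨h.toMarking.isBase, l.reverse, (cs.wordProd_reverse l).symm, ?_,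
    List.nodup_reverse.mpr hnodup, by rwa [List.mem_reverse]⟩, h.isGrowthWord.head_notMem⟩,
    h.spherical⟩
  · by_cases hm : ∀ j ∈ wordSupport s l, Adjacent cs m j
    · exact .inr (h.semiComplete_toMarking hm)
    · push Not at hm
      obtain ⟨j, hj, hmj⟩ := hm
      exact .inl (h.complete_toMarking hj hmj)
  · exact (cs.length_inv _).trans (hl.length_wordProd.trans List.length_reverse.symm)

end IsMarkingWord

theorem Marking.Good.not_spherical {μ : Marking cs} (hμ : μ.Good) :
    ¬ Spherical cs (μ.supp ∪ {μ.marker}) := by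
  intro hsph
  refine hμ.1.elim (fun hcomplete => hcomplete (hsph.isOfFinOrder ?_)) fun hsemi => hsemi.2.2 hsph
  have hmem {i : B} (hi : i ∈ μ.supp ∪ {μ.marker}) :
      cs.simple i ∈ Subgroup.closure (cs.simple '' (μ.supp ∪ {μ.marker})) :=
    Subgroup.subset_closure ⟨i, hi, rfl⟩
  have helt : μ.elt ∈ Subgroup.closure (cs.simple '' (μ.supp ∪ {μ.marker})) :=
    Subgroup.closure_mono (Set.image_mono Set.subset_union_left) μ.isSupport.2.1
  exact mul_mem (hmem (.inl μ.isSupport.1)) (mul_mem (mul_mem helt (hmem (.inr rfl)))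
    (inv_mem helt))

theorem Marking.Good.exists_isMarkingWord {μ : Marking cs} (hμ : μ.Good) :
    ∃ l, ∃ h : IsMarkingWord cs μ.core μ.marker l, h.toMarking = μ := by
  have hnonsph := hμ.not_spherical
  obtain ⟨-, ⟨⟨hbase, k, helt, hlen, hk, hcore⟩, hmarker⟩, hsph⟩ := hμ
  have helt' : μ.elt = (cs.wordProd k.reverse)⁻¹ := by rw [cs.wordProd_reverse, inv_inv, helt]
  have hk' : k.reverse.Nodup := List.nodup_reverse.mpr hk
  have hgrowth : IsGrowthWord cs μ.core k.reverse := by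
    refine isGrowthWord_of_length_wordReflection
      (List.nodup_cons.mpr ⟨by rwa [List.mem_reverse], hk'⟩) ?_
    rw [List.length_reverse, ← hlen, ← hbase.1, helt', inv_inv, wordReflection]
  have hsupp : μ.supp = wordSupport μ.core k.reverse :=
    μ.isSupport.unique (helt' ▸ isSupport_wordSupport hk')
  have hperp := (notMem_perpIn_univ hmarker).mp μ.marker_not_perp
  rw [hsupp] at hnonsph hsph hmarker hperp
  exact ⟨k.reverse, ⟨hgrowth.cons hmarker hperp, hsph, wordSupport_cons μ.core _ _ ▸ hnonsph⟩,
    Marking.eq_of_core_elt_marker rfl helt'.symm rfl⟩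

theorem IsGrowthWord.exists_isMarkingWord {k : List B} (hl : IsGrowthWord cs s l)
    (hsph : Spherical cs (wordSupport s l)) (hk : IsGrowthWord cs s k)
    (hnonsph : ¬ Spherical cs (wordSupport s k)) : ∃ m u, IsMarkingWord cs s m (u ++ l) := by
  obtain ⟨u, hu, hsub⟩ := hl.exists_append hk
  replace hnonsph : ¬ Spherical cs (wordSupport s (u ++ l)) := mt (·.mono hsub) hnonsph
  clear hsub
  induction u with
  | nil => exact absurd hsph hnonsph
  | cons m u ih =>
    by_cases hul : Spherical cs (wordSupport s (u ++ l))
    · exact ⟨m, u, hu, hul, hnonsph⟩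
    · exact ih hu.tail_of_cons hul

end MarkingWords

theorem exists_seq_of_reflTransGen {α : Type*} {r : α → α → Prop} {a b : α}
    (h : Relation.ReflTransGen r a b) :
    ∃ (n : ℕ) (f : ℕ → α), f 0 = a ∧ f n = b ∧ ∀ i < n, r (f i) (f (i + 1)) := by
  induction h using Relation.ReflTransGen.head_induction_on with
  | refl => exact ⟨0, fun _ => b, rfl, rfl, fun _ h => absurd h (Nat.not_lt_zero _)⟩
  | @head a c hac _ ih =>
    obtain ⟨n, f, hf0, hfn, hf⟩ := ih
    refine ⟨n + 1, fun | 0 => a | i + 1 => f i, rfl, hfn, ?_⟩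
    rintro (_ | i) hi
    · exact (congrArg (r a) hf0).mpr hac
    · exact hf i (Nat.lt_of_succ_lt_succ hi)

/-- Two markings are joined by a step if both are good and a move N1, M2 or M3 relates them. -/
def Marking.Step (μ ν : Marking cs) : Prop :=
  μ.Good ∧ ν.Good ∧ (MoveN1 μ ν ∨ MoveM2 μ ν ∨ MoveM3 μ ν)

theorem Marking.Step.symm {μ ν : Marking cs} : μ.Step ν → ν.Step μ := by
  rintro ⟨hμ, hν, ⟨hcore, helt, hadj⟩ | ⟨hcore, hmarker, j, helt, hadj⟩ | ⟨hcore, h⟩⟩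
  · exact ⟨hν, hμ, .inl ⟨hcore.symm, helt.symm, hadj.symm⟩⟩
  · exact ⟨hν, hμ, .inr (.inl ⟨hcore.symm, hmarker.symm, j, helt.symm, hmarker ▸ hadj⟩)⟩
  · refine ⟨hν, hμ, .inr (.inr ⟨hcore.symm, ?_⟩)⟩
    rwa [Set.union_assoc, Set.union_comm, ← Set.union_assoc]

/-- Two markings are joined if a finite sequence of steps leads from one to the other. -/
def Marking.Joined (μ ν : Marking cs) : Prop :=
  Relation.ReflTransGen Marking.Step μ ν

theorem Marking.Joined.symm {μ ν : Marking cs} (h : μ.Joined ν) : ν.Joined μ :=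
  Relation.reflTransGen_swap.mp (Relation.ReflTransGen.mono (fun _ _ => Marking.Step.symm) _ _ h)

section Paths

variable {s v v' : B} {l q q' : List B} {μ ν : Marking cs}

/-- The good markings with core `s` which, read as growth words with the marker adjoined, continue
the word `q`. -/
def markingsOver (cs : CoxeterSystem M W) (s : B) (q : List B) : Set (Marking cs) :=
  {μ | ∃ m l, ∃ h : IsMarkingWord cs s m l, q <:+ m :: l ∧ h.toMarking = μ}

theorem IsMarkingWord.toMarking_mem_markingsOver {m : B} (h : IsMarkingWord cs s m l)
    (hq : q <:+ m :: l) : h.toMarking ∈ markingsOver cs s q :=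
  ⟨m, l, h, hq, rfl⟩

theorem markingsOver_subsingleton (hq : ¬ Spherical cs (wordSupport s q)) :
    (markingsOver cs s q).Subsingleton := by
  have heq {m : B} {l : List B} (h : IsMarkingWord cs s m l) (hql : q <:+ m :: l) :
      q = m :: l :=
    (List.suffix_cons_iff.mp hql).resolve_right fun hql =>
      hq (h.spherical.mono (wordSupport_subset_of_suffix s hql))
  rintro _ ⟨m, l, h, hql, rfl⟩ _ ⟨n, k, h', hqk, rfl⟩
  obtain ⟨rfl, rfl⟩ := List.cons.inj ((heq h hql).symm.trans (heq h' hqk))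
  rfl

theorem exists_cons_of_mem_markingsOver (hl : Spherical cs (wordSupport s l))
    (hμ : μ ∈ markingsOver cs s l) :
    ∃ v, IsGrowthWord cs s (v :: l) ∧ μ ∈ markingsOver cs s (v :: l) := by
  obtain ⟨m, k, h, ⟨u, hu⟩, rfl⟩ := hμ
  obtain rfl | ⟨u, v, rfl⟩ := u.eq_nil_or_concat
  · exact absurd (hu ▸ hl) h.not_spherical
  · have hsuffix : v :: l <:+ m :: k := ⟨u, by simpa using hu⟩
    exact ⟨v, h.isGrowthWord.of_suffix hsuffix, h.toMarking_mem_markingsOver hsuffix⟩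

/-- Some good marking continuing `q` is joined to some good marking continuing `q'`. -/
def Bridged (cs : CoxeterSystem M W) (s : B) (q q' : List B) : Prop :=
  ∃ μ ∈ markingsOver cs s q, ∃ ν ∈ markingsOver cs s q', μ.Joined ν

theorem Bridged.symm (h : Bridged cs s q q') : Bridged cs s q' q := by
  obtain ⟨μ, hμ, ν, hν, h⟩ := h
  exact ⟨ν, hν, μ, hμ, h.symm⟩

theorem bridged_of_not_spherical_of_not_spherical (hv : IsGrowthWord cs s (v :: l))
    (hv' : IsGrowthWord cs s (v' :: l)) (hadj : Adjacent cs v v')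
    (hl : Spherical cs (wordSupport s l)) (hsph : ¬ Spherical cs (wordSupport s (v :: l)))
    (hsph' : ¬ Spherical cs (wordSupport s (v' :: l))) :
    Bridged cs s (v :: l) (v' :: l) := by
  have h : IsMarkingWord cs s v l := ⟨hv, hl, hsph⟩
  have h' : IsMarkingWord cs s v' l := ⟨hv', hl, hsph'⟩
  exact ⟨_, h.toMarking_mem_markingsOver List.suffix_rfl, _,
    h'.toMarking_mem_markingsOver List.suffix_rfl,
    .single ⟨h.good_toMarking, h'.good_toMarking, .inl ⟨rfl, rfl, hadj⟩⟩⟩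

theorem bridged_of_not_spherical_of_spherical (hv : IsGrowthWord cs s (v :: l))
    (hv' : IsGrowthWord cs s (v' :: l)) (hadj : Adjacent cs v v')
    (hsph : ¬ Spherical cs (wordSupport s (v :: l)))
    (hsph' : Spherical cs (wordSupport s (v' :: l))) :
    Bridged cs s (v :: l) (v' :: l) := by
  have hne : v ≠ v' := by
    rintro rfl
    exact hsph hsph'
  have hl : Spherical cs (wordSupport s l) :=
    hsph'.mono (wordSupport_subset_of_suffix s (List.suffix_cons v' l))
  have hsub : wordSupport s (v :: l) ⊆ wordSupport s (v :: v' :: l) :=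
    wordSupport_swap s v v' l ▸ wordSupport_subset_of_suffix s (List.suffix_cons v' (v :: l))
  have h : IsMarkingWord cs s v l := ⟨hv, hl, hsph⟩
  have h' : IsMarkingWord cs s v (v' :: l) := ⟨hv'.cons_cons hv hne, hsph', mt (·.mono hsub) hsph⟩
  have helt : h'.toMarking.elt = h.toMarking.elt * cs.simple v' := by
    simp only [IsMarkingWord.toMarking, cs.wordProd_cons, mul_inv_rev, cs.inv_simple]
  exact ⟨_, h.toMarking_mem_markingsOver List.suffix_rfl, _,
    h'.toMarking_mem_markingsOver (List.suffix_cons _ _),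
    .single ⟨h.good_toMarking, h'.good_toMarking, .inr (.inl ⟨rfl, rfl, v', .inr helt, hadj⟩)⟩⟩

theorem bridged_of_not_spherical_cons_cons (hv : IsGrowthWord cs s (v :: l))
    (hv' : IsGrowthWord cs s (v' :: l)) (hadj : Adjacent cs v v') (hne : v ≠ v')
    (hsph : Spherical cs (wordSupport s (v :: l)))
    (hsph' : Spherical cs (wordSupport s (v' :: l)))
    (hnonsph : ¬ Spherical cs (wordSupport s (v' :: v :: l))) :
    Bridged cs s (v :: l) (v' :: l) := by
  have h : IsMarkingWord cs s v' (v :: l) := ⟨hv.cons_cons hv' hne.symm, hsph, hnonsph⟩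
  have h' : IsMarkingWord cs s v (v' :: l) :=
    ⟨hv'.cons_cons hv hne, hsph', wordSupport_swap s v' v l ▸ hnonsph⟩
  have htwo : TwoSpherical cs (wordSupport s (v :: l) ∪ {v'} ∪ wordSupport s (v' :: l) ∪ {v}) := by
    have hcover : wordSupport s (v :: l) ∪ {v'} ∪ wordSupport s (v' :: l) ∪ {v} ⊆
        wordSupport s l ∪ {v} ∪ {v'} := by
      rw [wordSupport_cons, wordSupport_cons]
      grind
    have hvl {i : B} (hi : i ∈ wordSupport s l ∪ {v}) : i ∈ wordSupport s (v :: l) :=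
      wordSupport_cons s v l ▸ hi
    have hadj' {i : B} (hi : i ∈ wordSupport s l ∪ {v}) : Adjacent cs i v' := by
      obtain hi | rfl := hi
      · exact hsph'.adjacent (wordSupport_subset_of_suffix s (List.suffix_cons v' l) hi)
          (mem_wordSupport.mpr (.inr List.mem_cons_self))
      · exact hadj
    intro i hi j hj
    obtain hi' | rfl := hcover hi <;> obtain hj' | rfl := hcover hj
    exacts [hsph.adjacent (hvl hi') (hvl hj'), hadj' hi', (hadj' hj').symm, adjacent_self cs _]
  exact ⟨_, h.toMarking_mem_markingsOver (List.suffix_cons _ _), _,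
    h'.toMarking_mem_markingsOver (List.suffix_cons _ _),
    .single ⟨h.good_toMarking, h'.good_toMarking, .inr (.inr ⟨rfl, htwo⟩)⟩⟩

theorem bridged_of_spherical_cons_cons (hv : IsGrowthWord cs s (v :: l))
    (hv' : IsGrowthWord cs s (v' :: l)) (hne : v ≠ v')
    (hsph : Spherical cs (wordSupport s (v' :: v :: l)))
    (hnonsph : ∃ k, IsGrowthWord cs s k ∧ ¬ Spherical cs (wordSupport s k)) :
    Bridged cs s (v :: l) (v' :: l) := by
  obtain ⟨k, hk, hknonsph⟩ := hnonsph
  have hswap := wordSupport_swap s v' v l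
  obtain ⟨m, u, h⟩ := (hv.cons_cons hv' hne.symm).exists_isMarkingWord hsph hk hknonsph
  have hsupp (t : List B) :
      wordSupport s (t ++ v' :: v :: l) = wordSupport s (t ++ v :: v' :: l) := by
    rw [wordSupport_append, wordSupport_append, hswap]
  have h' : IsMarkingWord cs s m (u ++ v :: v' :: l) :=
    ⟨IsGrowthWord.append_congr (u := m :: u) h.isGrowthWord (hv'.cons_cons hv hne) hswap,
      hsupp u ▸ h.spherical, hsupp (m :: u) ▸ h.not_spherical⟩
  have helt : h.toMarking.elt = h'.toMarking.elt := by
    have hcomm := hv.commute_of_spherical hv' hne.symm hsph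
    simp only [IsMarkingWord.toMarking, cs.wordProd_append, cs.wordProd_cons, hcomm.left_comm]
  exact ⟨_, h.toMarking_mem_markingsOver ⟨m :: u ++ [v'], by simp⟩, _,
    h'.toMarking_mem_markingsOver ⟨m :: u ++ [v], by simp⟩,
    .single ⟨h.good_toMarking, h'.good_toMarking, .inl ⟨rfl, helt, adjacent_self cs m⟩⟩⟩

theorem bridged_of_adjacent (hv : IsGrowthWord cs s (v :: l))
    (hv' : IsGrowthWord cs s (v' :: l)) (hadj : Adjacent cs v v') (hne : v ≠ v')
    (hl : Spherical cs (wordSupport s l))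
    (hnonsph : ∃ k, IsGrowthWord cs s k ∧ ¬ Spherical cs (wordSupport s k)) :
    Bridged cs s (v :: l) (v' :: l) := by
  by_cases hsph : Spherical cs (wordSupport s (v :: l)) <;>
    by_cases hsph' : Spherical cs (wordSupport s (v' :: l))
  · by_cases hsph'' : Spherical cs (wordSupport s (v' :: v :: l))
    · exact bridged_of_spherical_cons_cons hv hv' hne hsph'' hnonsph
    · exact bridged_of_not_spherical_cons_cons hv hv' hadj hne hsph hsph' hsph''
  · exact (bridged_of_not_spherical_of_spherical hv' hv hadj.symm hsph' hsph).symm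
  · exact bridged_of_not_spherical_of_spherical hv hv' hadj hsph hsph'
  · exact bridged_of_not_spherical_of_not_spherical hv hv' hadj hl hsph hsph'

theorem joined_of_connectedIn (hl : IsGrowthWord cs s l) (hsph : Spherical cs (wordSupport s l))
    (hconn : ConnectedIn cs
      (Set.univ \ (wordSupport s l ∪ perpIn cs Set.univ (wordSupport s l))))
    (hjoined : ∀ v, IsGrowthWord cs s (v :: l) → ∀ μ ∈ markingsOver cs s (v :: l),
      ∀ ν ∈ markingsOver cs s (v :: l), μ.Joined ν)
    (hμ : μ ∈ markingsOver cs s l) (hν : ν ∈ markingsOver cs s l) : μ.Joined ν := by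
  have hnonsph : ∃ k, IsGrowthWord cs s k ∧ ¬ Spherical cs (wordSupport s k) := by
    obtain ⟨m, k, h, -, -⟩ := hμ
    exact ⟨m :: k, h.isGrowthWord, h.not_spherical⟩
  obtain ⟨a, ha, hμ⟩ := exists_cons_of_mem_markingsOver hsph hμ
  obtain ⟨b, hb, hνb⟩ := exists_cons_of_mem_markingsOver hsph hν
  have hpath := hconn a (hl.cons_iff_mem_compl.mp ha) b (hl.cons_iff_mem_compl.mp hb)
  clear hν hb
  induction hpath generalizing ν with
  | refl => exact hjoined a ha μ hμ ν hνb
  | @tail c d _ hcd ih =>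
    obtain ⟨hc, hd, hadj⟩ := hcd
    rw [← hl.cons_iff_mem_compl] at hc hd
    obtain rfl | hne := eq_or_ne c d
    · exact ih hνb
    · obtain ⟨μ', hμ', ν', hν', hbridge⟩ := bridged_of_adjacent hc hd hadj hne hsph hnonsph
      exact ((ih hμ').trans hbridge).trans (hjoined d hd ν' hν' ν hνb)

theorem joined_of_mem_markingsOver [WellFoundedGT {J : Set B // Spherical cs J}]
    (hconn : ∀ L, s ∈ L → IrreducibleSubset cs L → Spherical cs L →
      ConnectedIn cs (Set.univ \ (L ∪ perpIn cs Set.univ L)))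
    (hl : IsGrowthWord cs s l) (hsph : Spherical cs (wordSupport s l))
    (hμ : μ ∈ markingsOver cs s l) (hν : ν ∈ markingsOver cs s l) : μ.Joined ν := by
  induction hJ : (⟨wordSupport s l, hsph⟩ : {J : Set B // Spherical cs J})
    using WellFoundedGT.induction generalizing l μ ν with
  | ind J ih =>
    subst hJ
    refine joined_of_connectedIn hl hsph
      (hconn _ (self_mem_wordSupport s l) hl.irreducibleSubset hsph) ?_ hμ hν
    intro v hv μ hμ ν hν
    by_cases hvsph : Spherical cs (wordSupport s (v :: l))
    · have hlt : wordSupport s l ⊂ wordSupport s (v :: l) :=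
        ⟨wordSupport_subset_of_suffix s (List.suffix_cons v l), fun hsub =>
          hv.head_notMem (hsub (mem_wordSupport.mpr (.inr List.mem_cons_self)))⟩
      exact ih ⟨_, hvsph⟩ hlt hv hvsph hμ hν rfl
    · exact markingsOver_subsingleton hvsph hμ hν ▸ .refl

theorem Marking.Good.mem_markingsOver_nil (hμ : μ.Good) : μ ∈ markingsOver cs μ.core [] := by
  obtain ⟨l, h, hl⟩ := hμ.exists_isMarkingWord
  exact ⟨μ.marker, l, h, List.nil_suffix, hl⟩

theorem joined_of_good [WellFoundedGT {J : Set B // Spherical cs J}]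
    (hconn : ∀ L, s ∈ L → IrreducibleSubset cs L → Spherical cs L →
      ConnectedIn cs (Set.univ \ (L ∪ perpIn cs Set.univ L)))
    (hμ : μ.Good) (hν : ν.Good) (hcore : μ.core = s) (hcore' : ν.core = s) : μ.Joined ν := by
  subst hcore
  have hsph : Spherical cs (wordSupport μ.core []) := by
    obtain ⟨l, h, -⟩ := hμ.exists_isMarkingWord
    exact h.spherical.mono (wordSupport_subset_of_suffix μ.core List.nil_suffix)
  exact joined_of_mem_markingsOver hconn .nil hsph hμ.mem_markingsOver_nil
    (hcore' ▸ hν.mem_markingsOver_nil)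

end Paths

theorem connecting_good_markings_general {s : B} [WellFoundedGT {J : Set B // Spherical cs J}]
    (hconn : ∀ L, s ∈ L → IrreducibleSubset cs L → Spherical cs L →
      ConnectedIn cs (Set.univ \ (L ∪ perpIn cs Set.univ L)))
    {μ μ' : Marking cs} (hμ : μ.Good) (hμ' : μ'.Good) (hcore : μ.core = s)
    (hcore' : μ'.core = s) :
    ∃ (n : ℕ) (f : ℕ → Marking cs),
      f 0 = μ ∧ f n = μ' ∧ (∀ i ≤ n, (f i).Good) ∧
      ∀ i < n, MoveN1 (f i) (f (i + 1)) ∨ MoveM2 (f i) (f (i + 1)) ∨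
        MoveM3 (f i) (f (i + 1)) := by
  have hjoined : μ.Joined μ' := joined_of_good hconn hμ hμ' hcore hcore'
  obtain ⟨n, f, hf0, hfn, hstep⟩ := exists_seq_of_reflTransGen hjoined
  refine ⟨n, f, hf0, hfn, fun i hi => ?_, fun i hi => (hstep i hi).2.2⟩
  obtain rfl | hlt := hi.eq_or_lt
  exacts [hfn ▸ hμ', (hstep i hlt).1]

/-- If `S` is twist-rigid, then any two good markings with common core are
connected by a sequence of good markings in which consecutive markings are related by move
N1, M2 or M3. -/
theorem connecting_good_markings
    [Finite B] (cs' : CoxeterSystem M W)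
    (hTR : TwistRigidIn cs' Set.univ)
    (μ μ' : Marking cs') (hμ : μ.Good) (hμ' : μ'.Good) (s : B)
    (hcore : μ.core = s) (hcore' : μ'.core = s) :
    ∃ (n : ℕ) (f : ℕ → Marking cs'),
      f 0 = μ ∧ f n = μ' ∧ (∀ i ≤ n, (f i).Good) ∧
      ∀ i < n, MoveN1 (f i) (f (i + 1)) ∨ MoveM2 (f i) (f (i + 1)) ∨
        MoveM3 (f i) (f (i + 1)) :=
  connecting_good_markings_general (fun L _ => hTR L (Set.subset_univ L)) hμ hμ' hcore hcore'
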